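/- Fix integers A ≥ 2 and z ≥ 1 with A ≥ z, a real v ≥ 0, and reals b > 0 and τ₀ > 0. For 0 < q < 1/2 set p = 1 − q, λ = q/p, [n] = (1 − λ^n)/(1 − λ), P_A(z) = (I_{4pq}(z,1/2) − λ^{A+1})/(1 − λ^{A+1}), R(q) = b·[ (q z/(2p)) I_{4pq}(z,1/2) − ((A+1)λ^{A+1}/(p(1−λ)^3 [A+1]^2)) I_{(p−q)^2}(1/2,z) + ((2−λ+λ^{A+2})/((1−λ)^2[A+1])) p^{z−1}q^z/B(z,z) + P_A(z)(v/b+1) ], T(q) = τ₀·[ (z/(2p)) I_{4pq}(z,1/2) + ((A+1)/(p(1−λ)^2[A+1])) I_{(p−q)^2}(1/2,z) − p^{z−1}q^z/(p(1−λ)B(z,z)) + 1/q ], and Γ_A(q) = R(q)/T(q). Then Γ_A(q)/q^{z+1} → (b/τ₀)·( 2 C(2z−1, z)(v/b+1) + 2/B(z,z) ) as q → 0⁺, where C(n,k) denotes the binomial coefficient; in particular this limit does not depend on A. -/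

import Mathlib

open scoped BigOperators
open Filter

/-- The Beta function `B(a,b) = ∫_0^1 t^(a-1) (1-t)^(b-1) dt`. -/
noncomputable def Beta (a b : ℝ) : ℝ :=
  ∫ t in (0:ℝ)..1, t ^ (a - 1) * (1 - t) ^ (b - 1)

/-- The regularized incomplete Beta function
`I_x(a,b) = (1/B(a,b)) ∫_0^x t^(a-1) (1-t)^(b-1) dt`. -/
noncomputable def regBeta (x a b : ℝ) : ℝ :=
  (∫ t in (0:ℝ)..x, t ^ (a - 1) * (1 - t) ^ (b - 1)) / Beta a b


lemma Beta_eq_beta (a b : ℝ) (ha : 0 < a) (hb : 0 < b) : Beta a b = ProbabilityTheory.beta a b := by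
  rw [ProbabilityTheory.beta_eq_betaIntegralReal a b ha hb, Complex.betaIntegral]
  have : (∫ x in (0:ℝ)..1, (x:ℂ) ^ ((a:ℂ) - 1) * (1 - (x:ℂ)) ^ ((b:ℂ) - 1))
      = ((Beta a b : ℝ) : ℂ) := by
    rw [Beta, ← intervalIntegral.integral_ofReal]
    apply intervalIntegral.integral_congr
    intro x hx
    rw [Set.uIcc_of_le zero_le_one] at hx
    have h1 : (0:ℝ) ≤ 1 - x := by linarith [hx.2]
    simp only [Complex.ofReal_mul]
    rw [Complex.ofReal_cpow hx.1, Complex.ofReal_cpow h1]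
    push_cast
    rfl
  rw [this, Complex.ofReal_re]

lemma gamma_central (n : ℕ) :
    ((n + 1).centralBinom : ℝ) * ((n:ℝ) + 1) * (Real.Gamma ((n:ℝ) + 1) * Real.Gamma (1/2))
      = 4 ^ (n + 1) * Real.Gamma ((n:ℝ) + 1 + 1/2) := by
  induction n with
  | zero =>
    have h := Real.Gamma_add_one (s := (1/2:ℝ)) (by norm_num)
    have e : ((0:ℕ):ℝ) + 1 + 1/2 = 1/2 + 1 := by norm_num
    rw [e, h]
    norm_num [Nat.centralBinom, Nat.choose]
    ring
  | succ n ih =>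
    have h1 := Real.Gamma_add_one (s := (n:ℝ) + 1) (by positivity)
    have h2 := Real.Gamma_add_one (s := (n:ℝ) + 1 + 1/2) (by positivity)
    have e : (((n+1:ℕ):ℝ)) + 1 + 1/2 = (n:ℝ) + 1 + 1/2 + 1 := by push_cast; ring
    have hc : ((n:ℝ) + 1 + 1) * ((n + 1 + 1).centralBinom : ℝ)
        = 2 * (2 * ((n:ℝ) + 1) + 1) * ((n+1).centralBinom : ℝ) := by
      exact_mod_cast Nat.succ_mul_centralBinom_succ (n + 1)
    rw [e, h2]
    push_cast
    rw [h1]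
    linear_combination (((n:ℝ) + 1) * Real.Gamma ((n:ℝ) + 1) * Real.Gamma (1/2)) * hc
      + 2 * (2 * ((n:ℝ) + 1) + 1) * ih

lemma beta_half (z : ℕ) (hz : 1 ≤ z) :
    4 ^ z * (1 / (z:ℝ)) / Beta z (1/2) = 2 * ((2 * z - 1).choose z : ℝ) := by
  obtain ⟨n, rfl⟩ : ∃ n, z = n + 1 := ⟨z - 1, by omega⟩
  have h := gamma_central n
  have hc : (n + 1).centralBinom = 2 * (2 * (n + 1) - 1).choose (n + 1) := by
    have : 2 * (n + 1) - 1 = 2 * n + 1 := by omega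
    rw [this, Nat.centralBinom_eq_two_mul_choose, show 2 * (n + 1) = 2 * n + 1 + 1 by ring,
      Nat.choose_succ_succ, Nat.choose_symm_half]
    ring
  have hc' : ((n + 1).centralBinom : ℝ) = 2 * ((2 * (n + 1) - 1).choose (n + 1) : ℝ) := by
    exact_mod_cast hc
  rw [← hc', Beta_eq_beta _ _ (by positivity) (by norm_num), ProbabilityTheory.beta]
  push_cast
  have p1 : 0 < Real.Gamma ((n:ℝ) + 1) := Real.Gamma_pos_of_pos (by positivity)
  have p2 : 0 < Real.Gamma (1/2:ℝ) := Real.Gamma_pos_of_pos (by positivity)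
  have p3 : 0 < Real.Gamma ((n:ℝ) + 1 + 1/2) := Real.Gamma_pos_of_pos (by positivity)
  have p4 : (0:ℝ) < (n:ℝ) + 1 := by positivity
  generalize Real.Gamma ((n:ℝ) + 1) = g1 at *
  generalize Real.Gamma (1/2:ℝ) = g2 at *
  generalize Real.Gamma ((n:ℝ) + 1 + 1/2) = g3 at *
  rw [div_div_eq_mul_div, div_eq_iff (by positivity)]
  rw [mul_one_div, div_mul_eq_mul_div, div_eq_iff (by positivity)]
  linarith

lemma incBeta_bounds (z : ℕ) (hz : 1 ≤ z) (x : ℝ) (hx0 : 0 < x) (hx1 : x < 1) :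
    1 / (z:ℝ) ≤ (∫ t in (0:ℝ)..x, t ^ ((z:ℝ) - 1) * (1 - t) ^ ((1/2:ℝ) - 1)) / x ^ z ∧
    (∫ t in (0:ℝ)..x, t ^ ((z:ℝ) - 1) * (1 - t) ^ ((1/2:ℝ) - 1)) / x ^ z
      ≤ 1 / (z:ℝ) * (1 - x) ^ ((1/2:ℝ) - 1) := by
  have hz1 : (1:ℝ) ≤ z := by exact_mod_cast hz
  have hI : ∫ t in (0:ℝ)..x, t ^ ((z:ℝ) - 1) = x ^ z * (1 / z) := by
    rw [integral_rpow (Or.inl (by linarith))]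
    simp only [sub_add_cancel]
    rw [Real.zero_rpow (by positivity), Real.rpow_natCast]
    ring
  have hc1 : ContinuousOn (fun t : ℝ => t ^ ((z:ℝ) - 1)) (Set.uIcc 0 x) :=
    (Real.continuous_rpow_const (by linarith)).continuousOn
  have hc2 : ContinuousOn (fun t : ℝ => (1 - t) ^ ((1/2:ℝ) - 1)) (Set.uIcc 0 x) := by
    apply ContinuousOn.rpow_const (by fun_prop)
    intro t ht
    rw [Set.uIcc_of_le hx0.le] at ht
    left
    linarith [ht.2]
  have i1 := hc1.intervalIntegrable (μ := MeasureTheory.volume)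
  have i2 := (hc1.mul hc2).intervalIntegrable (μ := MeasureTheory.volume)
  have i3 := (hc1.mul (continuousOn_const (c := (1 - x) ^ ((1/2:ℝ) - 1)))).intervalIntegrable
    (μ := MeasureTheory.volume)
  have hxz : 0 < x ^ z := by positivity
  constructor
  · rw [le_div_iff₀ hxz, mul_comm, ← hI]
    apply intervalIntegral.integral_mono_on hx0.le i1 i2
    intro t ht
    have h0 : 0 ≤ t ^ ((z:ℝ) - 1) := Real.rpow_nonneg ht.1 _
    have h1 : 1 ≤ (1 - t) ^ ((1/2:ℝ) - 1) :=
      Real.one_le_rpow_of_pos_of_le_one_of_nonpos (by linarith [ht.2]) (by linarith [ht.1])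
        (by norm_num)
    exact le_mul_of_one_le_right h0 h1
  · rw [div_le_iff₀ hxz, mul_right_comm, mul_comm (1 / (z:ℝ)), ← hI,
      ← intervalIntegral.integral_mul_const]
    apply intervalIntegral.integral_mono_on hx0.le i2 i3
    intro t ht
    have h0 : 0 ≤ t ^ ((z:ℝ) - 1) := Real.rpow_nonneg ht.1 _
    exact mul_le_mul_of_nonneg_left
      (Real.rpow_le_rpow_of_nonpos (by linarith) (by linarith [ht.2]) (by norm_num)) h0

lemma incBeta_tendsto (z : ℕ) (hz : 1 ≤ z) :
    Tendsto (fun x : ℝ => (∫ t in (0:ℝ)..x, t ^ ((z:ℝ) - 1) * (1 - t) ^ ((1/2:ℝ) - 1)) / x ^ z)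
      (nhdsWithin 0 (Set.Ioi 0)) (nhds (1 / (z:ℝ))) := by
  have hu : Tendsto (fun x : ℝ => 1 / (z:ℝ) * (1 - x) ^ ((1/2:ℝ) - 1))
      (nhdsWithin 0 (Set.Ioi 0)) (nhds (1 / (z:ℝ))) := by
    have : ContinuousAt (fun x : ℝ => 1 / (z:ℝ) * (1 - x) ^ ((1/2:ℝ) - 1)) 0 := by
      apply ContinuousAt.mul continuousAt_const
      apply ContinuousAt.rpow_const (by fun_prop)
      left; norm_num
    have h := this.tendsto
    simp only [sub_zero, Real.one_rpow, mul_one] at h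
    exact h.mono_left nhdsWithin_le_nhds
  have hev : ∀ᶠ x : ℝ in nhdsWithin 0 (Set.Ioi 0), 0 < x ∧ x < 1 :=
    Ioo_mem_nhdsGT one_pos
  refine tendsto_of_tendsto_of_tendsto_of_le_of_le' tendsto_const_nhds hu ?_ ?_
  · filter_upwards [hev] with x hx using (incBeta_bounds z hz x hx.1 hx.2).1
  · filter_upwards [hev] with x hx using (incBeta_bounds z hz x hx.1 hx.2).2

lemma J_tendsto (z : ℕ) (hz : 1 ≤ z) :
    Tendsto (fun q : ℝ => regBeta (4 * (1 - q) * q) z (1/2) / q ^ z)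
      (nhdsWithin 0 (Set.Ioi 0)) (nhds (2 * ((2 * z - 1).choose z : ℝ))) := by
  have hev : ∀ᶠ x : ℝ in nhdsWithin 0 (Set.Ioi 0), 0 < x ∧ x < 1 :=
    Ioo_mem_nhdsGT one_pos
  have hx : Tendsto (fun q : ℝ => 4 * (1 - q) * q) (nhdsWithin 0 (Set.Ioi 0))
      (nhdsWithin 0 (Set.Ioi 0)) := by
    rw [tendsto_nhdsWithin_iff]
    constructor
    · have : Continuous (fun q : ℝ => 4 * (1 - q) * q) := by fun_prop
      have h := this.tendsto 0
      simp only [mul_zero] at h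
      exact h.mono_left nhdsWithin_le_nhds
    · filter_upwards [hev] with q hq
      have : 0 < 1 - q := by linarith [hq.2]
      have := hq.1
      simp only [Set.mem_Ioi]
      positivity
  have h1 := (incBeta_tendsto z hz).comp hx
  have h2 : Tendsto (fun q : ℝ => (4 * (1 - q)) ^ z) (nhdsWithin 0 (Set.Ioi 0))
      (nhds (4 ^ z)) := by
    have : Continuous (fun q : ℝ => (4 * (1 - q)) ^ z) := by fun_prop
    have h := this.tendsto 0
    simp only [sub_zero, mul_one] at h
    exact h.mono_left nhdsWithin_le_nhds
  have h3 := (h2.mul h1).div_const (Beta z (1/2))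
  rw [beta_half z hz] at h3
  refine h3.congr' ?_
  filter_upwards [hev] with q hq
  have a1 : (4 * (1 - q)) ^ z ≠ 0 := pow_ne_zero _ (by nlinarith [hq.2])
  have a2 : q ^ z ≠ 0 := pow_ne_zero _ hq.1.ne'
  simp only [Function.comp, regBeta]
  rw [mul_pow (4 * (1 - q)) q]
  field_simp

lemma K_tendsto (z : ℕ) (hz : 1 ≤ z) : ∃ c : ℝ,
    Tendsto (fun q : ℝ => regBeta ((1 - q - q) ^ 2) (1/2) z)
      (nhdsWithin 0 (Set.Ioi 0)) (nhds c) := by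
  have hz1 : (1:ℝ) ≤ z := by exact_mod_cast hz
  have hi : IntervalIntegrable (fun t : ℝ => t ^ ((1/2:ℝ) - 1) * (1 - t) ^ ((z:ℝ) - 1))
      MeasureTheory.volume 0 1 := by
    apply (intervalIntegral.intervalIntegrable_rpow' (by norm_num)).mul_continuousOn
    apply ContinuousOn.rpow_const (by fun_prop)
    intro t _
    right; linarith
  have hc := intervalIntegral.continuousOn_primitive_interval' hi Set.left_mem_uIcc
  rw [Set.uIcc_of_le zero_le_one] at hc
  have h1 := (hc 1 ⟨zero_le_one, le_refl _⟩).tendsto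
  have hev : ∀ᶠ x : ℝ in nhdsWithin 0 (Set.Ioi 0), 0 < x ∧ x < 1 :=
    Ioo_mem_nhdsGT one_pos
  have hx : Tendsto (fun q : ℝ => (1 - q - q) ^ 2) (nhdsWithin 0 (Set.Ioi 0))
      (nhdsWithin 1 (Set.Icc 0 1)) := by
    rw [tendsto_nhdsWithin_iff]
    constructor
    · have : Continuous (fun q : ℝ => (1 - q - q) ^ 2) := by fun_prop
      have h := this.tendsto 0
      simp only [sub_zero, one_pow] at h
      exact h.mono_left nhdsWithin_le_nhds
    · filter_upwards [hev] with q hq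
      exact ⟨sq_nonneg _, by nlinarith [hq.1, hq.2, mul_pos hq.1 (sub_pos.2 hq.2)]⟩
  exact ⟨_, (h1.comp hx).div_const _⟩

lemma tdiv {l : Filter ℝ} {f g : ℝ → ℝ} {x y : ℝ} (hf : Tendsto f l (nhds x))
    (hg : Tendsto g l (nhds y)) (hy : y ≠ 0) : Tendsto (fun q => f q / g q) l (nhds (x / y)) :=
  Filter.Tendsto.div hf hg hy

lemma num_alg (a J c L d K e P w B f g : ℝ) (hw : w ≠ 0) :
    a * J - c * L / d * K + e * (P * w / B) + (J - L) / f * g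
      = w * (a * (J / w) - c * (L / w) / d * K + e * (P / B) + (J / w - L / w) / f * g) := by
  obtain ⟨J', rfl⟩ : ∃ J', J = J' * w := ⟨J / w, by field_simp⟩
  obtain ⟨L', rfl⟩ : ∃ L', L = L' * w := ⟨L / w, by field_simp⟩
  rw [mul_div_cancel_right₀ _ hw, mul_div_cancel_right₀ _ hw]
  ring

lemma den_alg (X P r B q : ℝ) (hq : q ≠ 0) :
    X - P / (r * B) + 1 / q = (q * (X - P / r / B) + 1) / q := by
  rw [div_div, add_div, mul_div_cancel_left₀ _ hq]

lemma frac_alg (b N t D q : ℝ) (z : ℕ) (hq : q ≠ 0) :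
    b * (q ^ z * N) / (t * (D / q)) / q ^ (z + 1) = b * N / (t * D) := by
  have h : q ^ (z + 1) ≠ 0 := pow_ne_zero _ hq
  rw [← mul_div_assoc t D q, div_div_eq_mul_div, div_right_comm]
  congr 1
  rw [div_eq_iff h]
  ring

/-- the revenue ratio satisfies
`Γ_A(q)/q^(z+1) → (b/τ₀)(2 C(2z-1,z)(v/b+1) + 2/B(z,z))` as `q → 0⁺`,
independently of `A`. -/
theorem nakamoto_revenue_ratio_small_q (A z : ℕ) (hA2 : 2 ≤ A) (hz : 1 ≤ z) (hAz : z ≤ A)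
    (v b τ₀ : ℝ) (hv : 0 ≤ v) (hb : 0 < b) (hτ : 0 < τ₀) :
    Tendsto (fun q : ℝ =>
        (let p : ℝ := 1 - q
         let lam : ℝ := q / p
         (b * (q * (z : ℝ) / (2 * p) * regBeta (4 * p * q) (z : ℝ) (1 / 2)
            - ((A : ℝ) + 1) * lam ^ (A + 1)
                / (p * (1 - lam) ^ 3 * ((1 - lam ^ (A + 1)) / (1 - lam)) ^ 2)
                * regBeta ((p - q) ^ 2) (1 / 2) (z : ℝ)
            + (2 - lam + lam ^ (A + 2))
                / ((1 - lam) ^ 2 * ((1 - lam ^ (A + 1)) / (1 - lam)))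
                * (p ^ (z - 1) * q ^ z / Beta (z : ℝ) (z : ℝ))
            + ((regBeta (4 * p * q) (z : ℝ) (1 / 2) - lam ^ (A + 1))
                / (1 - lam ^ (A + 1))) * (v / b + 1)))
         /
         (τ₀ * ((z : ℝ) / (2 * p) * regBeta (4 * p * q) (z : ℝ) (1 / 2)
            + ((A : ℝ) + 1) / (p * (1 - lam) ^ 2 * ((1 - lam ^ (A + 1)) / (1 - lam)))
                * regBeta ((p - q) ^ 2) (1 / 2) (z : ℝ)
            - p ^ (z - 1) * q ^ z / (p * (1 - lam) * Beta (z : ℝ) (z : ℝ))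
            + 1 / q))) / q ^ (z + 1))
      (nhdsWithin 0 (Set.Ioi 0))
      (nhds ((b / τ₀) * (2 * ((2 * z - 1).choose z : ℝ) * (v / b + 1)
        + 2 / Beta (z : ℝ) (z : ℝ)))) := by
  
  obtain ⟨c, hK⟩ := K_tendsto z hz
  have hJ := J_tendsto z hz
  have hq : Tendsto (fun q : ℝ => q) (nhdsWithin 0 (Set.Ioi 0)) (nhds 0) :=
    tendsto_id.mono_left nhdsWithin_le_nhds
  have hp : Tendsto (fun q : ℝ => 1 - q) (nhdsWithin 0 (Set.Ioi 0)) (nhds 1) := by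
    simpa using hq.const_sub 1
  have hl : Tendsto (fun q : ℝ => q / (1 - q)) (nhdsWithin 0 (Set.Ioi 0)) (nhds 0) := by
    simpa using tdiv hq hp one_ne_zero
  have hl1 : Tendsto (fun q : ℝ => (1 - q / (1 - q))) (nhdsWithin 0 (Set.Ioi 0)) (nhds 1) := by
    simpa using hl.const_sub 1
  have hlA : Tendsto (fun q : ℝ => (1 - (q / (1 - q)) ^ (A + 1)))
      (nhdsWithin 0 (Set.Ioi 0)) (nhds 1) := by
    simpa using (hl.pow (A + 1)).const_sub 1
  have hbr : Tendsto (fun q : ℝ => (1 - (q / (1 - q)) ^ (A + 1)) / (1 - q / (1 - q)))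
      (nhdsWithin 0 (Set.Ioi 0)) (nhds 1) := by
    simpa using tdiv hlA hl1 one_ne_zero
  have hev : ∀ᶠ x : ℝ in nhdsWithin 0 (Set.Ioi 0), 0 < x ∧ x < 1 :=
    Ioo_mem_nhdsGT one_pos
  have hM : Tendsto (fun q : ℝ => (q / (1 - q)) ^ (A + 1) / q ^ z)
      (nhdsWithin 0 (Set.Ioi 0)) (nhds 0) := by
    have h := tdiv (hq.pow (A + 1 - z)) (hp.pow (A + 1)) (by simp)
    rw [zero_pow (by omega), zero_div] at h
    refine h.congr' ?_
    filter_upwards [hev] with q hq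
    have a2 : q ^ z ≠ 0 := pow_ne_zero _ hq.1.ne'
    have a1 : (1 - q) ^ (A + 1) ≠ 0 := pow_ne_zero _ (by linarith [hq.2])
    have e : q ^ (A + 1) = q ^ (A + 1 - z) * q ^ z := by rw [← pow_add]; congr 1; omega
    rw [div_pow, e]
    field_simp
  have hJ0 : Tendsto (fun q : ℝ => regBeta (4 * (1 - q) * q) z (1/2))
      (nhdsWithin 0 (Set.Ioi 0)) (nhds 0) := by
    have h := hJ.mul (hq.pow z)
    rw [zero_pow (by omega), mul_zero] at h
    refine h.congr' ?_
    filter_upwards [hev] with q hq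
    exact div_mul_cancel₀ _ (pow_ne_zero _ hq.1.ne')
  have hN1 := (tdiv (hq.mul_const (z:ℝ)) (hp.const_mul 2) (by norm_num)).mul hJ
  have hN2 := (tdiv (hM.const_mul ((A:ℝ) + 1)) ((hp.mul (hl1.pow 3)).mul (hbr.pow 2))
    (by norm_num)).mul hK
  have hN3 := (tdiv ((hl.const_sub 2).add (hl.pow (A + 2))) ((hl1.pow 2).mul hbr)
    (by norm_num)).mul ((hp.pow (z - 1)).div_const (Beta z z))
  have hN4 := (tdiv (hJ.sub hM) hlA one_ne_zero).mul_const (v / b + 1)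
  have hN := (((hN1.sub hN2).add hN3).add hN4).const_mul b
  have hD1 := (tdiv (tendsto_const_nhds (x := (z:ℝ))) (hp.const_mul 2) (by norm_num)).mul hJ0
  have hD2 := (tdiv (tendsto_const_nhds (x := (A:ℝ) + 1)) ((hp.mul (hl1.pow 2)).mul hbr)
    (by norm_num)).mul hK
  have hD3 := (tdiv ((hp.pow (z - 1)).mul (hq.pow z)) (hp.mul hl1) (by norm_num)).div_const
    (Beta z z)
  have hD := ((hq.mul ((hD1.add hD2).sub hD3)).add_const 1).const_mul τ₀
  have hfin := tdiv hN hD (by simpa using hτ.ne')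
  refine (hfin.congr' ?_).mono_right (le_of_eq ?_)
  · filter_upwards [hev] with q hq
    have h0 := hq.1.ne'
    dsimp only
    rw [num_alg _ _ _ _ _ _ _ _ _ _ _ _ (pow_ne_zero z h0), den_alg _ _ _ _ _ h0,
      frac_alg _ _ _ _ _ _ h0]
  · congr 1
    simp
    ring
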